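/- arXiv:2204.08299 — 3 statements merged into one kernel-verified Lean document; each statement's English description precedes it below -/
import Mathlib

section
/- (Avalanche Principle, part 1.) Let X be a metric space, b > 1 a real number such that X is strongly b-hyperbolic, and set δ = log 2 / log b. Let n ≥ 2, let x_0, x_1, …, x_n be points of X, and let ρ, σ > 0 be constants such that: (G) d(x_{i-1}, x_i) ≥ ρ for all i = 1, …, n; (A) ⟨x_{i-1}, x_{i+1}⟩_{x_i} ≤ σ for all i = 1, …, n−1; (P) 2σ < ρ − 2δ. Then ⟨x_0, x_n⟩_{x_{n-1}} < σ + (1/log b)·b^{2σ−ρ+2δ}, where log denotes the natural logarithm. -/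
/-!
Write `p i = ⟨x 0, x (i+1)⟩_{x i}` and `q = b ^ (2σ - ρ)`; since `b ^ δ = 2`, the hypothesis
`2σ < ρ - 2δ` says `q < 1/4`. At the basepoint `x (i+1)` the hyperbolicity inequality for
`x i, x 0, x (i+2)`, combined with the identity
`⟨x i, x 0⟩_{x (i+1)} = dist (x i) (x (i+1)) - p i`, gives
`b ^ (-σ) ≤ b ^ (p i - ρ) + b ^ (-p (i+1))`. The normalised quantities `v i = b ^ (σ - p i)`
therefore satisfy `v (i+1) ≥ 1 - q / v i`, and the bound `v i ≥ 1 - 2q` (which exceeds `1/2`)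
propagates by induction: `avalanche_step`. Finally `1 - 2q > exp (-4q)` for `0 < q < 1/4`, and
taking logarithms gives `p (n-1) < σ + 4q / log b`, where `4q = b ^ (2σ - ρ + 2δ)`.
-/

open Real

/-- The Gromov product `⟨x, z⟩_w` of `x` and `z` with respect to basepoint `w`. -/
noncomputable def gromovProd {X : Type*} [MetricSpace X] (w x z : X) : ℝ :=
  (dist x w + dist w z - dist x z) / 2

/-- `X` is strongly `b`-hyperbolic if for every basepoint `w`, the map
`(x, y) ↦ b ^ (-⟨x,y⟩_w)` satisfies the triangle inequality. -/
def StronglyHyperbolic (X : Type*) [MetricSpace X] (b : ℝ) : Prop :=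
  ∀ w x y z : X,
    b ^ (-(gromovProd w x z)) ≤ b ^ (-(gromovProd w x y)) + b ^ (-(gromovProd w y z))

theorem gromovProd_add_gromovProd {X : Type*} [MetricSpace X] (o y z : X) :
    gromovProd z y o + gromovProd y o z = dist y z := by
  simp only [gromovProd, dist_comm z o, dist_comm o y]
  ring

/-- Inductive step: the lower bound `b ^ (-⟨o, z⟩_y) ≥ b ^ (-σ) * (1 - 2q)`, with
`q = b ^ (2σ - ρ)`, passes from the consecutive points `y, z` to `z, w`. -/
theorem avalanche_step {X : Type*} [MetricSpace X] {b : ℝ} (hb : 1 < b)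
    (hX : StronglyHyperbolic X b) {ρ σ : ℝ} (hq : b ^ (2 * σ - ρ) < 1 / 4) (o y z w : X)
    (hG : ρ ≤ dist y z) (hA : gromovProd z y w ≤ σ)
    (h : b ^ (-σ) * (1 - 2 * b ^ (2 * σ - ρ)) ≤ b ^ (-(gromovProd y o z))) :
    b ^ (-σ) * (1 - 2 * b ^ (2 * σ - ρ)) ≤ b ^ (-(gromovProd z o w)) := by
  have hb0 : 0 < b := by linarith
  have hs : 0 < b ^ (-σ) := rpow_pos_of_pos hb0 _
  have ht : 0 < b ^ (-(gromovProd z y o)) := rpow_pos_of_pos hb0 _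
  have htri := hX z y o w
  have hsA : b ^ (-σ) ≤ b ^ (-(gromovProd z y w)) :=
    rpow_le_rpow_of_exponent_le hb.le (by linarith)
  have htu : b ^ (-(gromovProd z y o)) * b ^ (-(gromovProd y o z)) ≤
      b ^ (2 * σ - ρ) * (b ^ (-σ) * b ^ (-σ)) := by
    rw [← rpow_add hb0, ← rpow_add hb0, ← rpow_add hb0]
    apply rpow_le_rpow_of_exponent_le hb.le
    linarith [gromovProd_add_gromovProd o y z]
  set q := b ^ (2 * σ - ρ)
  set s := b ^ (-σ)
  set t := b ^ (-(gromovProd z y o))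
  have hu : s / 2 ≤ b ^ (-(gromovProd y o z)) := by nlinarith
  have ht2 : t ≤ 2 * q * s := by
    have h1 : t * (s / 2) ≤ q * (s * s) := (mul_le_mul_of_nonneg_left hu ht.le).trans htu
    refine le_of_mul_le_mul_right ?_ hs
    linarith
  linarith

/-- Writing `q = c / 4`: this is `1 - 2q > exp (-4q)` for `0 < q < 1/4`, a consequence of
`exp (4q) ≥ 1 + 4q` and `(1 - 2q) * (1 + 4q) = 1 + 2q * (1 - 4q)`. -/
theorem exp_neg_lt_one_sub_half {c : ℝ} (hc : 0 < c) (hc1 : c < 1) :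
    exp (-c) < 1 - c / 2 := by
  have h1 := add_one_le_exp c
  rw [exp_neg, inv_lt_comm₀ (exp_pos c) (by linarith)]
  refine lt_of_lt_of_le ?_ h1
  rw [inv_lt_iff_one_lt_mul₀ (by linarith)]
  nlinarith

theorem avalanche_principle_part1 {X : Type*} [MetricSpace X] (b : ℝ) (hb : 1 < b)
    (hX : StronglyHyperbolic X b) (δ : ℝ) (hδ : δ = Real.log 2 / Real.log b)
    (n : ℕ) (hn : 2 ≤ n) (x : ℕ → X) (ρ σ : ℝ) (hρ : 0 < ρ) (hσ : 0 < σ)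
    (hG : ∀ i, 1 ≤ i → i ≤ n → ρ ≤ dist (x (i - 1)) (x i))
    (hA : ∀ i, 1 ≤ i → i ≤ n - 1 → gromovProd (x i) (x (i - 1)) (x (i + 1)) ≤ σ)
    (hP : 2 * σ < ρ - 2 * δ) :
    gromovProd (x (n - 1)) (x 0) (x n) < σ + (1 / Real.log b) * b ^ (2 * σ - ρ + 2 * δ) := by
  have hb0 : 0 < b := by linarith
  have hL : 0 < Real.log b := Real.log_pos hb
  have hδ4 : b ^ (2 * δ) = 4 := by
    have h2 : b ^ δ = 2 := by
      rw [rpow_def_of_pos hb0, hδ, mul_div_cancel₀ _ hL.ne', Real.exp_log (by norm_num)]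
    rw [two_mul, rpow_add hb0, h2]
    norm_num
  have hq4 : b ^ (2 * σ - ρ + 2 * δ) = 4 * b ^ (2 * σ - ρ) := by
    rw [rpow_add hb0, hδ4, mul_comm]
  have hq0 : 0 < b ^ (2 * σ - ρ) := rpow_pos_of_pos hb0 _
  have hq : b ^ (2 * σ - ρ) < 1 / 4 := by
    have : b ^ (2 * σ - ρ + 2 * δ) < 1 := rpow_lt_one_of_one_lt_of_neg hb (by linarith)
    linarith
  have key : ∀ k, k + 2 ≤ n → b ^ (-σ) * (1 - 2 * b ^ (2 * σ - ρ)) ≤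
      b ^ (-(gromovProd (x (k + 1)) (x 0) (x (k + 2)))) := by
    intro k
    induction k with
    | zero =>
      intro hk
      have h1 : gromovProd (x 1) (x 0) (x 2) ≤ σ := hA 1 le_rfl (by omega)
      have h2 : b ^ (-σ) ≤ b ^ (-(gromovProd (x 1) (x 0) (x 2))) :=
        rpow_le_rpow_of_exponent_le hb.le (by linarith)
      refine le_trans ?_ h2
      have hs : 0 < b ^ (-σ) := rpow_pos_of_pos hb0 _
      nlinarith
    | succ k ih =>
      intro hk
      exact avalanche_step hb hX hq (x 0) (x (k + 1)) (x (k + 2)) (x (k + 3))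
        (hG (k + 2) (by omega) (by omega)) (hA (k + 2) (by omega) (by omega)) (ih (by omega))
  obtain ⟨m, rfl⟩ : ∃ m, n = m + 2 := ⟨n - 2, by omega⟩
  have hm := key m le_rfl
  change gromovProd (x (m + 1)) (x 0) (x (m + 2)) < _
  rw [hq4]
  set q := b ^ (2 * σ - ρ)
  set p := gromovProd (x (m + 1)) (x 0) (x (m + 2))
  have hexp := exp_neg_lt_one_sub_half (c := 4 * q) (by linarith) (by linarith)
  have hlt : exp (Real.log b * (-σ) + -(4 * q)) < exp (Real.log b * (-p)) := by
    rw [exp_add, ← rpow_def_of_pos hb0, ← rpow_def_of_pos hb0]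
    refine lt_of_lt_of_le (mul_lt_mul_of_pos_left hexp (rpow_pos_of_pos hb0 _)) ?_
    rwa [show 1 - 4 * q / 2 = 1 - 2 * q by ring]
  have hlog := exp_lt_exp.mp hlt
  have h3 : p - σ < 4 * q / Real.log b := by
    rw [lt_div_iff₀ hL]
    linarith
  have h4 : 1 / Real.log b * (4 * q) = 4 * q / Real.log b := by ring
  linarith
end

section
/- (Avalanche Principle, part 2.) Let X be a metric space, b > 1 a real number such that X is strongly b-hyperbolic, and set δ = log 2 / log b. Let n ≥ 2, let x_0, x_1, …, x_n be points of X, and let ρ, σ > 0 be constants such that: (G) d(x_{i-1}, x_i) ≥ ρ for all i = 1, …, n; (A) ⟨x_{i-1}, x_{i+1}⟩_{x_i} ≤ σ for all i = 1, …, n−1; (P) 2σ < ρ − 2δ. Then d(x_0, x_n) > ρ + (n−1)(ρ − 2σ − 2δ). -/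
/-!
The angle condition propagates from the neighbour `x (k - 1)` to the starting point `x 0`, at the
cost of one `δ`: `⟨x 0, x (k + 1)⟩_{x k} < σ + δ` for `1 ≤ k < n` (`gromovProd_zero_lt`). Indeed, if
`⟨x 0, x k⟩_{x (k - 1)} < σ + δ`, then `x 0` and `x (k - 1)` have Gromov product more than
`ρ - σ - δ > σ + δ` at `x k`. Since `b ^ (-(σ + δ)) = b ^ (-σ) / 2`, the triangle inequality for
`b ^ (-⟨·,·⟩)` leaves more than half of `b ^ (-σ)` for the pair `x 0`, `x (k + 1)`. Each step
therefore increases the distance to `x 0` by more than `ρ - 2 * σ - 2 * δ`, and the increments add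
up.
-/

open Real

theorem rpow_neg_add_log_two_div {b : ℝ} (hb : 1 < b) (σ : ℝ) :
    b ^ (-(σ + Real.log 2 / Real.log b)) = b ^ (-σ) / 2 := by
  have hb0 : 0 < b := by linarith
  rw [neg_add, ← sub_eq_add_neg, Real.rpow_sub hb0, Real.log_div_log,
    Real.rpow_logb hb0 hb.ne' two_pos]

/-- If `⟨p, r⟩_w` is at most `σ` while `⟨p, q⟩_w` exceeds `σ + δ`, then `⟨q, r⟩_w` is less than
`σ + δ`, where `δ = log 2 / log b`: one summand in the triangle inequality is less than half of the
left-hand side, so the other is more than half of it. -/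
theorem gromovProd_lt_of_lt {X : Type*} [MetricSpace X] {b : ℝ} (hb : 1 < b)
    (hX : StronglyHyperbolic X b) {δ σ : ℝ} (hδ : δ = Real.log 2 / Real.log b) {w p q r : X}
    (h₁ : gromovProd w p r ≤ σ) (h₂ : σ + δ < gromovProd w p q) :
    gromovProd w q r < σ + δ := by
  have hhalf : b ^ (-(σ + δ)) = b ^ (-σ) / 2 := hδ ▸ rpow_neg_add_log_two_div hb σ
  have htri := hX w p q r
  have hpr : b ^ (-σ) ≤ b ^ (-(gromovProd w p r)) :=
    Real.rpow_le_rpow_of_exponent_le hb.le (by linarith)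
  have hpq : b ^ (-(gromovProd w p q)) < b ^ (-(σ + δ)) :=
    Real.rpow_lt_rpow_of_exponent_lt hb (by linarith)
  have hqr : b ^ (-(σ + δ)) < b ^ (-(gromovProd w q r)) := by linarith
  linarith [(Real.rpow_lt_rpow_left_iff hb).1 hqr]

theorem gromovProd_zero_lt {X : Type*} [MetricSpace X] {b : ℝ} (hb : 1 < b)
    (hX : StronglyHyperbolic X b) {δ : ℝ} (hδ : δ = Real.log 2 / Real.log b)
    {n : ℕ} {x : ℕ → X} {ρ σ : ℝ}
    (hG : ∀ i, 1 ≤ i → i ≤ n → ρ ≤ dist (x (i - 1)) (x i))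
    (hA : ∀ i, 1 ≤ i → i ≤ n - 1 → gromovProd (x i) (x (i - 1)) (x (i + 1)) ≤ σ)
    (hP : 2 * σ < ρ - 2 * δ) (k : ℕ) (hk : 1 ≤ k) (hkn : k ≤ n - 1) :
    gromovProd (x k) (x 0) (x (k + 1)) < σ + δ := by
  induction k, hk using Nat.le_induction with
  | base =>
    have hδ0 : 0 < δ := hδ ▸ div_pos (Real.log_pos one_lt_two) (Real.log_pos hb)
    have h := hA 1 le_rfl hkn
    simp only [Nat.sub_self] at h
    linarith
  | succ k hk ih =>
    have ih := ih (by omega)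
    have hang := hA (k + 1) (by omega) hkn
    have hgap := hG (k + 1) (by omega) (by omega)
    simp only [Nat.add_sub_cancel] at hang hgap
    refine gromovProd_lt_of_lt hb hX hδ hang ?_
    -- `⟨x k, x 0⟩_{x (k+1)} + ⟨x 0, x (k+1)⟩_{x k} = d(x k, x (k+1))`
    have hsum : gromovProd (x (k + 1)) (x k) (x 0) + gromovProd (x k) (x 0) (x (k + 1))
        = dist (x k) (x (k + 1)) := by
      unfold gromovProd
      rw [dist_comm (x (k + 1)) (x 0), dist_comm (x k) (x 0)]
      ring
    linarith

theorem avalanche_principle_part2 {X : Type*} [MetricSpace X] (b : ℝ) (hb : 1 < b)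
    (hX : StronglyHyperbolic X b) (δ : ℝ) (hδ : δ = Real.log 2 / Real.log b)
    (n : ℕ) (hn : 2 ≤ n) (x : ℕ → X) (ρ σ : ℝ) (hρ : 0 < ρ) (hσ : 0 < σ)
    (hG : ∀ i, 1 ≤ i → i ≤ n → ρ ≤ dist (x (i - 1)) (x i))
    (hA : ∀ i, 1 ≤ i → i ≤ n - 1 → gromovProd (x i) (x (i - 1)) (x (i + 1)) ≤ σ)
    (hP : 2 * σ < ρ - 2 * δ) :
    dist (x 0) (x n) > ρ + ((n : ℝ) - 1) * (ρ - 2 * σ - 2 * δ) := by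
  have hstep : ∀ k, 1 ≤ k → k ≤ n - 1 →
      dist (x 0) (x k) + (ρ - 2 * σ - 2 * δ) < dist (x 0) (x (k + 1)) := by
    intro k hk hkn
    have hgr := gromovProd_zero_lt hb hX hδ hG hA hP k hk hkn
    have hgap := hG (k + 1) (by omega) (by omega)
    simp only [Nat.add_sub_cancel] at hgap
    unfold gromovProd at hgr
    linarith
  -- The bound is strict only from `m = 2` on, so the induction starts there.
  have main : ∀ m, 2 ≤ m → m ≤ n →
      ρ + ((m : ℝ) - 1) * (ρ - 2 * σ - 2 * δ) < dist (x 0) (x m) := by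
    intro m hm
    induction m, hm using Nat.le_induction with
    | base =>
      intro _
      have h₀ := hG 1 le_rfl (by omega)
      have h₁ := hstep 1 le_rfl (by omega)
      simp only [Nat.sub_self, Nat.reduceAdd] at h₀ h₁
      push_cast
      linarith
    | succ m hm ih =>
      intro hmn
      have ih := ih (by omega)
      have h₁ := hstep m (by omega) (by omega)
      push_cast
      linarith
  exact main n hn le_rfl
end

section
/- (Telescoping rate-of-convergence lemma.) Let b > 1 and let (x_n)_{n ≥ 2} be a sequence of real numbers converging to a real number x such that for every n ≥ 2, |x_n − x_{2n}| ≤ (log n)/(n·log b). Then there exists a constant C > 0 such that for every n ≥ 2, |x_n − x| ≤ C·(log n)/(n·log b), where log denotes the natural logarithm. -/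
/-!
The differences along `n, 2n, 4n, …` telescope. Since `log 2 ≤ log n`, the `i`-th difference is at
most `(i + 1) / 2 ^ i` times the bound `log n / (n * log b)` at `n`, and
`∑_{i < k} (i + 1) / 2 ^ i = 4 - (2 * k + 4) / 2 ^ k`. Hence every `x (2 ^ k * n)` lies within
`4 * (log n / (n * log b))` of `x n`; letting `k → ∞` gives the claim with `C = 4`.
-/

open Real Filter

/-- The `k`-th dyadic bound, compared with the bound at `n`. -/
lemma dyadic_bound (b : ℝ) (hb : 1 < b) (n k : ℕ) (hn : 2 ≤ n) :
    Real.log ((2 ^ k * n : ℕ) : ℝ) / (((2 ^ k * n : ℕ) : ℝ) * Real.log b) ≤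
      ((k + 1 : ℝ) / 2 ^ k) * (Real.log n / (n * Real.log b)) := by
  have hb' : 0 < Real.log b := Real.log_pos hb
  have hn' : (2 : ℝ) ≤ n := by exact_mod_cast hn
  have hn0 : (0 : ℝ) < n := by linarith
  have hlog : Real.log 2 ≤ Real.log n := Real.log_le_log (by norm_num) hn'
  have hexp : Real.log ((2 ^ k * n : ℕ) : ℝ) = k * Real.log 2 + Real.log n := by
    push_cast
    rw [Real.log_mul (by positivity) hn0.ne', Real.log_pow]
  rw [hexp, div_mul_div_comm]
  push_cast
  rw [← mul_assoc]
  gcongr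
  nlinarith [mul_le_mul_of_nonneg_left hlog (Nat.cast_nonneg (α := ℝ) k)]

lemma abs_sub_dyadic_le (b : ℝ) (hb : 1 < b) (x : ℕ → ℝ)
    (h : ∀ n : ℕ, 2 ≤ n → |x n - x (2 * n)| ≤ Real.log n / (n * Real.log b))
    (n : ℕ) (hn : 2 ≤ n) (k : ℕ) :
    |x n - x (2 ^ k * n)| ≤
      (4 - (2 * k + 4 : ℝ) / 2 ^ k) * (Real.log n / (n * Real.log b)) := by
  induction k with
  | zero => simp
  | succ k ih =>
    have h1 : 2 ≤ 2 ^ k * n := hn.trans (Nat.le_mul_of_pos_left n (by positivity))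
    have h2 := (h _ h1).trans (dyadic_bound b hb n k hn)
    have h3 : 2 ^ (k + 1) * n = 2 * (2 ^ k * n) := by ring
    have h4 : (4 - (2 * ((k + 1 : ℕ) : ℝ) + 4) / 2 ^ (k + 1)) =
        (4 - (2 * k + 4 : ℝ) / 2 ^ k) + (k + 1 : ℝ) / 2 ^ k := by
      push_cast
      field_simp
      ring
    rw [h3, h4, add_mul]
    exact (abs_sub_le _ (x (2 ^ k * n)) _).trans (add_le_add ih h2)

theorem telescoping_rate_of_convergence (b : ℝ) (hb : 1 < b)
    (x : ℕ → ℝ) (l : ℝ) (hconv : Tendsto x atTop (nhds l))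
    (h : ∀ n : ℕ, 2 ≤ n → |x n - x (2 * n)| ≤ Real.log n / (n * Real.log b)) :
    ∃ C > 0, ∀ n : ℕ, 2 ≤ n → |x n - l| ≤ C * (Real.log n / (n * Real.log b)) := by
  refine ⟨4, by norm_num, fun n hn => ?_⟩
  have hsub : Tendsto (fun k : ℕ => 2 ^ k * n) atTop atTop :=
    (tendsto_pow_atTop_atTop_of_one_lt (by norm_num : 1 < 2)).atTop_mul_const' (by omega)
  refine le_of_tendsto ((tendsto_const_nhds.sub (hconv.comp hsub)).abs)
    (Eventually.of_forall fun k => (abs_sub_dyadic_le b hb x h n hn k).trans ?_)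
  have hb' : 0 < Real.log b := Real.log_pos hb
  have hlog : 0 ≤ Real.log n := Real.log_natCast_nonneg n
  gcongr
  exact sub_le_self _ (by positivity)
end
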